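/- In the extended network, for every induced edge flow g ∈ ℓ(Λ̃) ⊆ L¹₊(H)^Ẽ, the total travel time can be rewritten as ⟨D(g,·), g⟩ = ∫_H (t_f − t)·Σ_{i∈I} r_i(t) dσ(t) + ∫_H ∇_{d̃} G(t) dσ(t), where ⟨D(g,·), g⟩ := Σ_{e∈Ẽ} ∫_H D_e(g,·)·g_e dσ. -/

import Mathlib

open MeasureTheory Set
open scoped ENNReal

noncomputable section

/-- A real function is *absolutely continuous* on the interval `[a,b]`. -/
def ACOn (f : ℝ → ℝ) (a b : ℝ) : Prop :=
  ∀ ε > 0, ∃ δ > 0, ∀ n : ℕ, ∀ c d : Fin n → ℝ,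
    (∀ k, c k ∈ Set.Icc a b ∧ d k ∈ Set.Icc a b ∧ c k ≤ d k) →
    (Pairwise fun k l => Disjoint (Set.Ioo (c k) (d k)) (Set.Ioo (c l) (d l))) →
    (∑ k, (d k - c k)) < δ → (∑ k, |f (d k) - f (c k)|) < ε

/-- A real function vanishing outside the set `S`. -/
def SuppOn (S : Set ℝ) (f : ℝ → ℝ) : Prop := ∀ t ∉ S, f t = 0

/-- A dynamic-flow network: a finite directed graph `(V,E)`, commodities `I` with
sources `s i`, sinks `d i`, values-of-time `vot i` and network inflow rates `r i`,
a time horizon `[0, tf]` with a flow-carrying horizon `[0, tf']`, and a family of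
traversal-time functions `D e gₑ t` depending on the inflow rate `gₑ` into edge `e`. -/
structure DynNet (V E I : Type) where
  src : E → V
  dst : E → V
  s : I → V
  d : I → V
  vot : I → ℝ
  r : I → ℝ → ℝ
  tf : ℝ
  tf' : ℝ
  D : E → (ℝ → ℝ) → ℝ → ℝ

namespace DynNet

variable {V E I : Type} [Fintype E] [DecidableEq E] [Fintype I] [DecidableEq V]

/-- The time horizon `H = [0, tf]`. -/
def H (N : DynNet V E I) : Set ℝ := Icc 0 N.tf

/-- The flow-carrying horizon `H' = [0, tf']`. -/
def H' (N : DynNet V E I) : Set ℝ := Icc 0 N.tf'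

/-- Membership in `L¹₊(H)`: nonnegative and integrable on `H`. -/
def MemL1pos (N : DynNet V E I) (f : ℝ → ℝ) : Prop :=
  (∀ t, 0 ≤ f t) ∧ IntegrableOn f N.H

/-- Edge exit time `T_e(gₑ, t) = t + D_e(gₑ, t)`. -/
def Te (N : DynNet V E I) (e : E) (ge : ℝ → ℝ) (t : ℝ) : ℝ := t + N.D e ge t

/-- Arrival time after traversing the list of edges `p` (entered at time `t`)
under the edge flows `g`; `arrive g (w.take j) t` is the arrival time `A_{w,j+1}(g,t)`
at (the tail of) the `j`-th edge (0-based) of a walk `w`. -/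
def arrive (N : DynNet V E I) (g : E → ℝ → ℝ) : List E → ℝ → ℝ
  | [], t => t
  | e :: p, t => N.arrive g p (N.Te e (g e) t)

/-- `w` is a (finite, possibly non-simple) walk from `v₁` to `v₂`. -/
def IsWalk (N : DynNet V E I) (v₁ v₂ : V) (w : List E) : Prop :=
  w ≠ [] ∧ w.Chain' (fun e e' => N.dst e = N.src e') ∧
    w.head?.map N.src = some v₁ ∧ w.getLast?.map N.dst = some v₂

/-- Walk-commodity pairs: a walk from `s i` to `d i` together with its commodity `i`. -/
abbrev WalkIdx (N : DynNet V E I) : Type :=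
  {wi : List E × I // N.IsWalk (N.s wi.2) (N.d wi.2) wi.1}

/-- The preimage (within `H`) of `[0,t]` under the arrival time along the prefix `p`
computed with travel times induced by `g`. -/
def arrPre (N : DynNet V E I) (g : E → ℝ → ℝ) (p : List E) (t : ℝ) : Set ℝ :=
  {τ | τ ∈ N.H ∧ N.arrive g p τ ∈ Icc 0 t}

/-- `g` is the network loading of the walk inflow `h` under the *fixed* travel times
induced by `u` (parametrized network loading). -/
def ParamInduces (N : DynNet V E I) (u : E → ℝ → ℝ) (h : N.WalkIdx → ℝ → ℝ)
    (g : E → ℝ → ℝ) : Prop :=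
  ∀ e : E, ∀ t ∈ N.H,
    (∫ s in Icc (0:ℝ) t, g e s) =
      ∑' w : N.WalkIdx,
        ∑ j ∈ Finset.range w.1.1.length,
          if w.1.1[j]? = some e then ∫ s in N.arrPre u (w.1.1.take j) t, h w s else 0

/-- `g` is an edge flow induced by the walk inflow `h`. -/
def Induces (N : DynNet V E I) (h : N.WalkIdx → ℝ → ℝ) (g : E → ℝ → ℝ) : Prop :=
  N.ParamInduces g h g

/-- `f = ℓᵘ_{w,j}(h_w)`: the parametrized edge flow induced (under frozen travel
times `D(u,·)`) by the inflow `hw` into the walk with prefix `p` before the edge. -/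
def IsParamEdgeFlow (N : DynNet V E I) (u : E → ℝ → ℝ) (hw : ℝ → ℝ) (p : List E)
    (f : ℝ → ℝ) : Prop :=
  N.MemL1pos f ∧ ∀ t ∈ N.H, (∫ s in Icc (0:ℝ) t, f s) = ∫ s in N.arrPre u p t, hw s

/-- The walk inflow `h` is nonnegative, `ℓ¹`-summable, and routes the demand
`r i` of every commodity `i`. -/
def FeasibleInflow (N : DynNet V E I) (h : N.WalkIdx → ℝ → ℝ) : Prop :=
  (∀ w, N.MemL1pos (h w)) ∧
  (Summable fun w : N.WalkIdx => ∫ s in N.H, h w s) ∧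
  ∀ i : I, ∀ᵐ t ∂(volume.restrict N.H),
    (∑' w : {w : N.WalkIdx // w.1.2 = i}, h w.1 t) = N.r i t

/-- `h ∈ Λ`: admissible walk inflows (feasible and admitting an induced edge flow
supported on `H'`). -/
def InLambda (N : DynNet V E I) (h : N.WalkIdx → ℝ → ℝ) : Prop :=
  N.FeasibleInflow h ∧
  ∃ g : E → ℝ → ℝ, (∀ e, N.MemL1pos (g e) ∧ SuppOn N.H' (g e)) ∧ N.Induces h g

/-- `load` is a network-loading operator `ℓ : Λ → L¹₊(H)^E`. -/
def IsLoading (N : DynNet V E I) (load : (N.WalkIdx → ℝ → ℝ) → E → ℝ → ℝ) : Prop :=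
  ∀ h, N.InLambda h →
    (∀ e, N.MemL1pos (load h e) ∧ SuppOn N.H' (load h e)) ∧ N.Induces h (load h)

/-- `ℓ(Λ)`: the set of edge flows induced via the loading operator `load`. -/
def InducedBy (N : DynNet V E I) (load : (N.WalkIdx → ℝ → ℝ) → E → ℝ → ℝ) :
    Set (E → ℝ → ℝ) := {g | ∃ h, N.InLambda h ∧ load h = g}

/-- The set of all edge flows (supported on `H'`) induced by some admissible walk inflow. -/
def InducedSet (N : DynNet V E I) : Set (E → ℝ → ℝ) :=
  {g | (∀ e, N.MemL1pos (g e) ∧ SuppOn N.H' (g e)) ∧ ∃ h, N.InLambda h ∧ N.Induces h g}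

/-- Assumption (TravelGeneral), the parts not involving the loading operator:
absolute continuity, FIFO, the lower bound `τmin` on `H'`, and existence of edge
outflow rates. -/
structure TravelGeneral (N : DynNet V E I) (τmin : ℝ) : Prop where
  tmin_pos : 0 < τmin
  nonneg : ∀ e ge, N.MemL1pos ge → ∀ t ∈ N.H, 0 ≤ N.D e ge t
  ac : ∀ e ge, N.MemL1pos ge → ACOn (N.D e ge) 0 N.tf
  fifo : ∀ e ge, N.MemL1pos ge → MonotoneOn (N.Te e ge) N.H
  lb : ∀ e ge, N.MemL1pos ge → ∀ t ∈ N.H', τmin ≤ N.D e ge t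
  outflow : ∀ e ge, N.MemL1pos ge → ∃ gm, N.MemL1pos gm ∧
    ∀ t ∈ N.H, (∫ s in {τ | τ ∈ N.H ∧ N.Te e ge τ ∈ Icc 0 t}, ge s)
      = ∫ s in Icc (0:ℝ) t, gm s

/-- Assumption (TravelGeneral), upper-bound part: travel times of induced flows
are bounded by `τmax` on `H'`. -/
def TravelUB (N : DynNet V E I) (load : (N.WalkIdx → ℝ → ℝ) → E → ℝ → ℝ)
    (τmax : ℝ) : Prop :=
  0 < τmax ∧ ∀ h, N.InLambda h → ∀ e, ∀ t ∈ N.H', N.D e (load h e) t ≤ τmax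

/-- Assumption (AMapsHToH) for flows induced by the loading operator. -/
def AMapsHToH (N : DynNet V E I) (load : (N.WalkIdx → ℝ → ℝ) → E → ℝ → ℝ) : Prop :=
  ∀ h, N.InLambda h → ∀ w : N.WalkIdx, ∀ j ≤ w.1.1.length, ∀ t ∈ N.H,
    N.arrive (load h) (w.1.1.take j) t ∈ N.H

/-- Assumption (AMapsHToH), loading-operator-free version. -/
def AMapsHToHSet (N : DynNet V E I) : Prop :=
  ∀ g ∈ N.InducedSet, ∀ w : N.WalkIdx, ∀ j ≤ w.1.1.length, ∀ t ∈ N.H,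
    N.arrive g (w.1.1.take j) t ∈ N.H

/-- Assumption (AMapsHToH), set version for flows in `InducedSet`. -/
def TravelUBSet (N : DynNet V E I) (τmax : ℝ) : Prop :=
  0 < τmax ∧ ∀ g ∈ N.InducedSet, ∀ e, ∀ t ∈ N.H', N.D e (g e) t ≤ τmax

/-- Assumption (LuImplL): if a feasible walk inflow `h` induces `u` under the travel
times frozen to `D(u,·)` (for `u` supported on `H'`), then `h ∈ Λ` and `ℓ(h) = u`. -/
def LuImplL (N : DynNet V E I) (load : (N.WalkIdx → ℝ → ℝ) → E → ℝ → ℝ) : Prop :=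
  ∀ u : E → ℝ → ℝ, (∀ e, N.MemL1pos (u e) ∧ SuppOn N.H' (u e)) →
    ∀ h, N.FeasibleInflow h → N.ParamInduces u h u → N.InLambda h ∧ load h = u

/-- Assumption (TravelMono): monotonicity of cumulative outflows in cumulative
inflows, and monotonicity of travel times in inflow rates. -/
structure TravelMono (N : DynNet V E I) : Prop where
  cum_mono : ∀ e ge g'e, N.MemL1pos ge → N.MemL1pos g'e →
    (∀ t ∈ N.H, (∫ s in Icc (0:ℝ) t, g'e s) ≤ ∫ s in Icc (0:ℝ) t, ge s) →
    ∀ t ∈ N.H, (∫ s in {τ | τ ∈ N.H ∧ N.Te e g'e τ ∈ Icc 0 t}, g'e s)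
      ≤ ∫ s in {τ | τ ∈ N.H ∧ N.Te e ge τ ∈ Icc 0 t}, ge s
  D_mono : ∀ e ge g'e, N.MemL1pos ge → N.MemL1pos g'e →
    (∀ᵐ t ∂(volume.restrict N.H), g'e t ≤ ge t) →
    ∀ t ∈ N.H, N.D e g'e t ≤ N.D e ge t

/-- Weighted total travel time `Ψ_{(w,i)}(g,t) = γ_i · (A_{w,|w|+1}(g,t) − t)`. -/
def psi (N : DynNet V E I) (g : E → ℝ → ℝ) (i : I) (w : List E) (t : ℝ) : ℝ :=
  N.vot i * (N.arrive g w t - t)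

/-- Total toll `P^p_w(g,t)` paid along the walk `w` entered at time `t`. -/
def toll (N : DynNet V E I) (p : E → ℝ → ℝ) (g : E → ℝ → ℝ) : List E → ℝ → ℝ
  | [], _ => 0
  | e :: rest, t => p e t + N.toll p g rest (N.Te e (g e) t)

/-- Combined cost `Ψ_w(g,t) + P^p_w(g,t)` of a walk-commodity pair. -/
def cost (N : DynNet V E I) (p : E → ℝ → ℝ) (g : E → ℝ → ℝ) (w : N.WalkIdx)
    (t : ℝ) : ℝ :=
  N.psi g w.1.2 w.1.1 t + N.toll p g w.1.1 t

/-- `h` is a `p`-dynamic user equilibrium (`p`-DUE). -/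
def IsDUE (N : DynNet V E I) (load : (N.WalkIdx → ℝ → ℝ) → E → ℝ → ℝ)
    (p : E → ℝ → ℝ) (h : N.WalkIdx → ℝ → ℝ) : Prop :=
  N.InLambda h ∧
  ∀ w : N.WalkIdx, ∀ᵐ t ∂(volume.restrict N.H),
    0 < h w t → ∀ w' : N.WalkIdx, w'.1.2 = w.1.2 →
      N.cost p (load h) w t ≤ N.cost p (load h) w' t

/-- `u` is implementable via the nonnegative tolls `p` and the walk inflow `h`. -/
def ImplementableVia (N : DynNet V E I) (load : (N.WalkIdx → ℝ → ℝ) → E → ℝ → ℝ)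
    (u : E → ℝ → ℝ) (p : E → ℝ → ℝ) (h : N.WalkIdx → ℝ → ℝ) : Prop :=
  (∀ e t, 0 ≤ p e t) ∧ N.IsDUE load p h ∧ load h = u ∧
  (∑ e : E, ∫⁻ t in N.H, ENNReal.ofReal (p e t * u e t)) < ⊤

/-- `u` is implementable. -/
def Implementable (N : DynNet V E I) (load : (N.WalkIdx → ℝ → ℝ) → E → ℝ → ℝ)
    (u : E → ℝ → ℝ) : Prop :=
  ∃ p h, N.ImplementableVia load u p h

/-- Total travel time `⟨D(g,·), g⟩` of the edge flow `g`. -/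
def totalCost (N : DynNet V E I) (g : E → ℝ → ℝ) : ℝ :=
  ∑ e : E, ∫ t in N.H, N.D e (g e) t * g e t

/-- `g` is a system optimal flow. -/
def SysOpt (N : DynNet V E I) (load : (N.WalkIdx → ℝ → ℝ) → E → ℝ → ℝ)
    (g : E → ℝ → ℝ) : Prop :=
  g ∈ N.InducedBy load ∧ ∀ g' ∈ N.InducedBy load, N.totalCost g ≤ N.totalCost g'

/-- Objective value `Σ_w ⟨Ψ_w(u,·), h_w⟩` of the master problem `P(u)`
(valued in `ℝ≥0∞` as it may be infinite). -/
def objVal (N : DynNet V E I) (u : E → ℝ → ℝ) (h : N.WalkIdx → ℝ → ℝ) : ℝ≥0∞ :=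
  ∑' w : N.WalkIdx, ∫⁻ t in N.H, ENNReal.ofReal (N.psi u w.1.2 w.1.1 t * h w t)

/-- Cumulative edge inflow `G⁺ₑ(t)`. -/
def cumIn (ge : ℝ → ℝ) (t : ℝ) : ℝ := ∫ s in Icc (0:ℝ) t, ge s

/-- Cumulative edge outflow `G⁻ₑ(t)`. -/
def cumOut (N : DynNet V E I) (e : E) (ge : ℝ → ℝ) (t : ℝ) : ℝ :=
  ∫ s in {τ | τ ∈ N.H ∧ N.Te e ge τ ∈ Icc 0 t}, ge s

/-- Cumulative node balance `∇_v G(t)`. -/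
def nodeBal (N : DynNet V E I) (g : E → ℝ → ℝ) (v : V) (t : ℝ) : ℝ :=
  (∑ e : E, if N.src e = v then cumIn (g e) t else 0)
    - ∑ e : E, if N.dst e = v then N.cumOut e (g e) t else 0

/-- Cumulative network inflow `∫₀ᵗ Σ_{i : s_i = v} r_i` at node `v`. -/
def netIn (N : DynNet V E I) (v : V) (t : ℝ) : ℝ :=
  ∫ s in Icc (0:ℝ) t, ∑ i : I, (if N.s i = v then N.r i s else 0)

/-- Vickrey queue length `q_e(gₑ, t)` on an edge with free-flow time `τe`. -/
def vickQueue (N : DynNet V E I) (e : E) (τe : ℝ) (ge : ℝ → ℝ) (t : ℝ) : ℝ :=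
  (∫ s in Icc (0:ℝ) t, ge s) - ∫ s in {τ | τ ∈ N.H ∧ N.Te e ge τ ≤ t + τe}, ge s

/-- Edge `e` follows the Vickrey queuing model with free-flow time `τe > 0` and
service rate `νe > 0`. -/
def IsVickreyEdge (N : DynNet V E I) (e : E) (τe νe : ℝ) : Prop :=
  0 < τe ∧ 0 < νe ∧
  ∀ ge, N.MemL1pos ge →
    (∀ t ∈ N.H, N.D e ge t = τe + N.vickQueue e τe ge t / νe) ∧
    (∀ t ∈ N.H, 0 ≤ N.vickQueue e τe ge t) ∧
    (∀ t₁ ∈ N.H, ∀ t₂ ∈ N.H, t₁ ≤ t₂ →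
      N.cumOut e ge t₂ - N.cumOut e ge t₁ ≤ νe * (t₂ - t₁))

/-- Edge `e` has constant travel time `τe` (e.g. a Vickrey edge with `ν = ∞`). -/
def IsConstEdge (N : DynNet V E I) (e : E) (τe : ℝ) : Prop :=
  ∀ ge, N.MemL1pos ge → ∀ t ∈ N.H, N.D e ge t = τe

end DynNet

/-- The extended network: a super source `s̃ = Sum.inr false` with a zero-travel-time
edge `(s̃, s_i)` (encoded `Sum.inr (Sum.inl i)`) for each commodity `i`, and a super
sink `d̃ = Sum.inr true` with a zero-travel-time edge `(d, d̃)`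
(encoded `Sum.inr (Sum.inr ())`); the original edges keep their travel times. -/
def DynNet.extend {V E I : Type} (N : DynNet V E I) (d0 : V) :
    DynNet (V ⊕ Bool) (E ⊕ (I ⊕ Unit)) I where
  src := fun e => match e with
    | Sum.inl e => Sum.inl (N.src e)
    | Sum.inr (Sum.inl _) => Sum.inr false
    | Sum.inr (Sum.inr _) => Sum.inl d0
  dst := fun e => match e with
    | Sum.inl e => Sum.inl (N.dst e)
    | Sum.inr (Sum.inl i) => Sum.inl (N.s i)
    | Sum.inr (Sum.inr _) => Sum.inr true
  s := fun _ => Sum.inr false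
  d := fun _ => Sum.inr true
  vot := N.vot
  r := N.r
  tf := N.tf
  tf' := N.tf'
  D := fun e ge t => match e with
    | Sum.inl e => N.D e ge t
    | _ => 0

namespace DynNet

section Aux

variable {V E I : Type}

lemma arrive_append (N : DynNet V E I) (g : E → ℝ → ℝ) (p q : List E) (t : ℝ) :
    N.arrive g (p ++ q) t = N.arrive g q (N.arrive g p t) := by
  induction p generalizing t with
  | nil => rfl
  | cons e p ih => exact ih _

lemma arrive_take_succ (N : DynNet V E I) (g : E → ℝ → ℝ) (w : List E) (j : ℕ)
    (hj : j < w.length) (t : ℝ) :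
    N.arrive g (w.take (j + 1)) t
      = N.Te w[j] (g w[j]) (N.arrive g (w.take j) t) := by
  rw [← List.take_append_getElem hj, arrive_append]
  rfl

/-- Projection onto the horizon. -/
def clip (N : DynNet V E I) (t : ℝ) : ℝ := max 0 (min N.tf t)

lemma clip_mem (N : DynNet V E I) (h0 : 0 ≤ N.tf) (t : ℝ) : N.clip t ∈ N.H :=
  ⟨le_max_left _ _, max_le h0 (min_le_left _ _)⟩

lemma clip_eq (N : DynNet V E I) {t : ℝ} (ht : t ∈ N.H) : N.clip t = t := by
  unfold clip
  rw [min_eq_right ht.2, max_eq_right ht.1]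

lemma clip_mono (N : DynNet V E I) : Monotone N.clip := by
  intro a b hab
  unfold clip
  gcongr

lemma measurable_clip_comp (N : DynNet V E I) (h0 : 0 ≤ N.tf) {f : ℝ → ℝ}
    (hf : MonotoneOn f N.H) : Measurable (fun t => f (N.clip t)) := by
  have : Monotone (fun t => f (N.clip t)) := fun a b hab =>
    hf (N.clip_mem h0 a) (N.clip_mem h0 b) (N.clip_mono hab)
  exact this.measurable

/-- The measure on the horizon with density `f`. -/
def dens (N : DynNet V E I) (f : ℝ → ℝ) : Measure ℝ :=
  (volume.restrict N.H).withDensity (fun t => ENNReal.ofReal (f t))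

lemma measurableSet_H (N : DynNet V E I) : MeasurableSet N.H := measurableSet_Icc

lemma dens_apply (N : DynNet V E I) {f : ℝ → ℝ} (hf : N.MemL1pos f) {S : Set ℝ}
    (hS : MeasurableSet S) :
    N.dens f S = ENNReal.ofReal (∫ s in S ∩ N.H, f s) := by
  unfold dens
  rw [withDensity_apply _ hS, Measure.restrict_restrict hS,
    ofReal_integral_eq_lintegral_ofReal]
  · exact hf.2.mono_set inter_subset_right
  · exact Filter.Eventually.of_forall hf.1

lemma lintegral_dens (N : DynNet V E I) {f : ℝ → ℝ} (hf : N.MemL1pos f) {φ : ℝ → ℝ≥0∞}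
    (hφ : AEMeasurable φ (volume.restrict N.H)) :
    ∫⁻ t, φ t ∂(N.dens f) = ∫⁻ t in N.H, ENNReal.ofReal (f t) * φ t := by
  unfold dens
  rw [lintegral_withDensity_eq_lintegral_mul₀ _ hφ]
  · rfl
  · exact hf.2.aemeasurable.ennreal_ofReal

lemma ae_dens (N : DynNet V E I) {f : ℝ → ℝ} : ∀ᵐ t ∂(N.dens f), t ∈ N.H :=
  (withDensity_absolutelyContinuous _ _).ae_le (ae_restrict_mem N.measurableSet_H)

/-- clipped arrival time -/
def ahat (N : DynNet V E I) (g : E → ℝ → ℝ) (p : List E) (t : ℝ) : ℝ :=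
  N.arrive g p (N.clip t)

variable [DecidableEq E]

/-- the term of the loading equation -/
def term (N : DynNet V E I) (g : E → ℝ → ℝ) (h : N.WalkIdx → ℝ → ℝ) (e : E) (t : ℝ)
    (w : N.WalkIdx) : ℝ :=
  ∑ j ∈ Finset.range w.1.1.length,
    if w.1.1[j]? = some e then ∫ s in N.arrPre g (w.1.1.take j) t, h w s else 0

lemma arrPre_eq (N : DynNet V E I) (g : E → ℝ → ℝ) (p : List E)
    (hmaps : ∀ t ∈ N.H, N.arrive g p t ∈ N.H) (t : ℝ) :
    N.arrPre g p t = (N.ahat g p ⁻¹' Iic t) ∩ N.H := by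
  ext s
  simp only [arrPre, ahat, mem_ofPred_eq, mem_inter_iff, mem_preimage, mem_Iic]
  constructor
  · rintro ⟨h1, h2⟩
    rw [N.clip_eq h1]
    exact ⟨h2.2, h1⟩
  · rintro ⟨h1, h2⟩
    rw [N.clip_eq h2] at h1
    exact ⟨h2, (hmaps s h2).1, h1⟩

/-- The loading equation as an equation of measures. -/
lemma dens_eq_sum (N : DynNet V E I) (h0 : 0 ≤ N.tf) (g : E → ℝ → ℝ)
    (h : N.WalkIdx → ℝ → ℝ) (e : E) (hge : N.MemL1pos (g e)) (hh : ∀ w, N.MemL1pos (h w))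
    (hind : N.Induces h g)
    (hmaps : ∀ w : N.WalkIdx, ∀ j ≤ w.1.1.length, ∀ t ∈ N.H,
      N.arrive g (w.1.1.take j) t ∈ N.H)
    (hmono : ∀ w : N.WalkIdx, ∀ j ≤ w.1.1.length,
      MonotoneOn (N.arrive g (w.1.1.take j)) N.H)
    (hsum : ∀ t ∈ N.H, Summable (N.term g h e t)) :
    N.dens (g e) = Measure.sum fun w : N.WalkIdx =>
      ∑ j ∈ Finset.range w.1.1.length,
        if w.1.1[j]? = some e then (N.dens (h w)).map (N.ahat g (w.1.1.take j)) else 0 := by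
  have hfin : IsFiniteMeasure (N.dens (g e)) := by
    constructor
    rw [N.dens_apply hge MeasurableSet.univ]
    exact ENNReal.ofReal_lt_top
  have hmeas : ∀ w : N.WalkIdx, ∀ j ≤ w.1.1.length,
      Measurable (N.ahat g (w.1.1.take j)) := fun w j hj =>
    N.measurable_clip_comp h0 (hmono w j hj)
  have key : ∀ t ∈ N.H, N.dens (g e) (Iic t) = (Measure.sum fun w : N.WalkIdx =>
      ∑ j ∈ Finset.range w.1.1.length,
        if w.1.1[j]? = some e then (N.dens (h w)).map (N.ahat g (w.1.1.take j)) else 0)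
        (Iic t) := by
    intro t ht
    rw [Measure.sum_apply _ measurableSet_Iic, N.dens_apply hge measurableSet_Iic]
    have h1 : Iic t ∩ N.H = Icc 0 t := by
      ext s
      simp only [H, mem_inter_iff, mem_Iic, mem_Icc]
      have := ht.2
      constructor
      · rintro ⟨a, b, c⟩; exact ⟨b, a⟩
      · rintro ⟨a, b⟩; exact ⟨b, a, b.trans this⟩
    have hnn : ∀ w, 0 ≤ N.term g h e t w := by
      intro w
      refine Finset.sum_nonneg fun j _ => ?_
      split_ifs
      · exact integral_nonneg (hh w).1
      · exact le_rfl
    have h2 := hind e t ht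
    rw [h1, h2]
    change ENNReal.ofReal (∑' w, N.term g h e t w) = _
    rw [ENNReal.ofReal_tsum_of_nonneg hnn (hsum t ht)]
    refine tsum_congr fun w => ?_
    unfold term
    rw [ENNReal.ofReal_sum_of_nonneg, Measure.finsetSum_apply]
    · refine Finset.sum_congr rfl fun j hj => ?_
      have hj' := (Finset.mem_range.1 hj).le
      split_ifs with hc
      · rw [Measure.map_apply (hmeas w j hj') measurableSet_Iic,
          N.dens_apply (hh w) ((hmeas w j hj') measurableSet_Iic),
          N.arrPre_eq g _ (hmaps w j hj')]
      · simp
    · intro j _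
      split_ifs
      · exact integral_nonneg (hh w).1
      · exact le_rfl
  have hHae : ∀ S : Set ℝ, MeasurableSet S → (Measure.sum fun w : N.WalkIdx =>
      ∑ j ∈ Finset.range w.1.1.length,
        if w.1.1[j]? = some e then (N.dens (h w)).map (N.ahat g (w.1.1.take j)) else 0) S
      = (Measure.sum fun w : N.WalkIdx =>
      ∑ j ∈ Finset.range w.1.1.length,
        if w.1.1[j]? = some e then (N.dens (h w)).map (N.ahat g (w.1.1.take j)) else 0)
        (S ∩ N.H) := by
    intro S hS
    rw [Measure.sum_apply _ hS, Measure.sum_apply _ (hS.inter N.measurableSet_H)]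
    refine tsum_congr fun w => ?_
    rw [Measure.finsetSum_apply, Measure.finsetSum_apply]
    refine Finset.sum_congr rfl fun j hj => ?_
    have hj' := (Finset.mem_range.1 hj).le
    split_ifs with hc
    · rw [Measure.map_apply (hmeas w j hj') hS,
        Measure.map_apply (hmeas w j hj') (hS.inter N.measurableSet_H)]
      congr 1
      ext s
      simp only [mem_preimage, mem_inter_iff]
      exact ⟨fun hs => ⟨hs, hmaps w j hj' _ (N.clip_mem h0 s)⟩, fun hs => hs.1⟩
    · simp
  have hHae' : ∀ S : Set ℝ, MeasurableSet S →
      N.dens (g e) S = N.dens (g e) (S ∩ N.H) := by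
    intro S hS
    rw [N.dens_apply hge hS, N.dens_apply hge (hS.inter N.measurableSet_H), inter_assoc,
      inter_self]
  refine Measure.ext_of_Iic _ _ fun a => ?_
  rw [hHae _ measurableSet_Iic, hHae' _ measurableSet_Iic]
  rcases lt_or_ge a 0 with ha | ha
  · have : Iic a ∩ N.H = ∅ := by
      ext s
      simp only [H, mem_inter_iff, mem_Iic, mem_Icc, mem_empty_iff_false, iff_false]
      rintro ⟨h1, h2, h3⟩
      linarith
    rw [this]; simp
  · have : Iic a ∩ N.H = Iic (min a N.tf) ∩ N.H := by
      ext s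
      simp only [H, mem_inter_iff, mem_Iic, mem_Icc, le_min_iff]
      tauto
    rw [this, ← hHae _ measurableSet_Iic, ← hHae' _ measurableSet_Iic]
    exact key _ ⟨le_min ha h0, min_le_right _ _⟩

lemma lintegral_of_dens_eq_sum (N : DynNet V E I) (g : E → ℝ → ℝ)
    (h : N.WalkIdx → ℝ → ℝ) (e : E)
    (hmeas : ∀ w : N.WalkIdx, ∀ j ≤ w.1.1.length, Measurable (N.ahat g (w.1.1.take j)))
    (heq : N.dens (g e) = Measure.sum fun w : N.WalkIdx =>
      ∑ j ∈ Finset.range w.1.1.length,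
        if w.1.1[j]? = some e then (N.dens (h w)).map (N.ahat g (w.1.1.take j)) else 0)
    (φ : ℝ → ℝ≥0∞) (hφ : Measurable φ) :
    ∫⁻ t, φ t ∂(N.dens (g e)) = ∑' w : N.WalkIdx, ∑ j ∈ Finset.range w.1.1.length,
        if w.1.1[j]? = some e then ∫⁻ t, φ (N.ahat g (w.1.1.take j) t) ∂(N.dens (h w))
        else 0 := by
  rw [heq, lintegral_sum_measure]
  refine tsum_congr fun w => ?_
  rw [lintegral_finsetSum_measure]
  refine Finset.sum_congr rfl fun j hj => ?_
  have hj' := (Finset.mem_range.1 hj).le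
  split_ifs with hc
  · rw [lintegral_map hφ (hmeas w j hj')]
  · simp

/-- Tonelli for the cumulative function. -/
lemma lintegral_cum (N : DynNet V E I) (f : ℝ → ℝ) (hf : N.MemL1pos f) :
    ∫⁻ t in N.H, N.dens f (Iic t) = ∫⁻ s, ENNReal.ofReal (N.tf - s) ∂(N.dens f) := by
  have hfin : IsFiniteMeasure (N.dens f) := by
    constructor
    rw [N.dens_apply hf MeasurableSet.univ]
    exact ENNReal.ofReal_lt_top
  have hm : Measurable (Function.uncurry fun (t s : ℝ) =>
      ({p : ℝ × ℝ | p.2 ≤ p.1}.indicator (fun _ => (1 : ℝ≥0∞)) (t, s))) := by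
    have : MeasurableSet {p : ℝ × ℝ | p.2 ≤ p.1} :=
      measurableSet_le measurable_snd measurable_fst
    exact (measurable_const.indicator this)
  have h1 : ∀ t : ℝ, N.dens f (Iic t) = ∫⁻ s, ({p : ℝ × ℝ | p.2 ≤ p.1}.indicator
      (fun _ => (1 : ℝ≥0∞)) (t, s)) ∂(N.dens f) := by
    intro t
    rw [← lintegral_indicator_one measurableSet_Iic]
    rfl
  simp_rw [h1]
  rw [lintegral_lintegral_swap hm.aemeasurable]
  refine lintegral_congr_ae ?_
  filter_upwards [N.ae_dens (f := f)] with s hs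
  have h2 : (fun t : ℝ => ({p : ℝ × ℝ | p.2 ≤ p.1}.indicator
      (fun _ => (1 : ℝ≥0∞)) (t, s))) = (Ici s).indicator 1 := by
    ext t
    rfl
  rw [h2, lintegral_indicator_one measurableSet_Ici, Measure.restrict_apply measurableSet_Ici]
  have h3 : Ici s ∩ N.H = Icc s N.tf := by
    ext x
    have := hs.1
    simp only [H, mem_inter_iff, mem_Ici, mem_Icc]
    constructor
    · rintro ⟨a, b, c⟩; exact ⟨a, c⟩
    · rintro ⟨a, b⟩; exact ⟨a, this.trans a, b⟩
  rw [h3, Real.volume_Icc]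

end Aux

end DynNet

namespace DynNet

section Aux2

variable {V E I : Type}

lemma arrive_monotoneOn (N : DynNet V E I) (g : E → ℝ → ℝ)
    (hT : ∀ e, MonotoneOn (N.Te e (g e)) N.H) (w : List E)
    (hmaps : ∀ j ≤ w.length, ∀ t ∈ N.H, N.arrive g (w.take j) t ∈ N.H) :
    ∀ j ≤ w.length, MonotoneOn (N.arrive g (w.take j)) N.H := by
  intro j
  induction j with
  | zero => intro _ a _ b _ hab; simpa [arrive] using hab
  | succ j ih =>
    intro hj a ha b hb hab
    rw [N.arrive_take_succ g w j hj, N.arrive_take_succ g w j hj]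
    exact hT _ (hmaps j (by omega) a ha) (hmaps j (by omega) b hb)
      (ih (by omega) ha hb hab)

lemma arrive_le_succ (N : DynNet V E I) (g : E → ℝ → ℝ)
    (hD : ∀ e, ∀ t ∈ N.H, 0 ≤ N.D e (g e) t) (w : List E)
    (hmaps : ∀ j ≤ w.length, ∀ t ∈ N.H, N.arrive g (w.take j) t ∈ N.H) (j : ℕ)
    (hj : j < w.length) (t : ℝ) (ht : t ∈ N.H) :
    N.arrive g (w.take j) t ≤ N.arrive g (w.take (j + 1)) t := by
  rw [N.arrive_take_succ g w j hj]
  have := hD w[j] _ (hmaps j hj.le t ht)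
  unfold Te
  linarith

lemma le_arrive (N : DynNet V E I) (g : E → ℝ → ℝ)
    (hD : ∀ e, ∀ t ∈ N.H, 0 ≤ N.D e (g e) t) (w : List E)
    (hmaps : ∀ j ≤ w.length, ∀ t ∈ N.H, N.arrive g (w.take j) t ∈ N.H)
    (t : ℝ) (ht : t ∈ N.H) : ∀ j ≤ w.length, t ≤ N.arrive g (w.take j) t := by
  intro j
  induction j with
  | zero => intro _; simp [arrive]
  | succ j ih =>
    intro hj
    exact (ih (by omega)).trans (N.arrive_le_succ g hD w hmaps j hj t ht)

/-- Total travel time summed over walks. -/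
lemma sum_edges [Fintype E] [DecidableEq E] (N : DynNet V E I) (h0 : 0 ≤ N.tf)
    (g : E → ℝ → ℝ) (h : N.WalkIdx → ℝ → ℝ) (hge : ∀ e, N.MemL1pos (g e))
    (hmaps : ∀ w : N.WalkIdx, ∀ j ≤ w.1.1.length, ∀ t ∈ N.H,
      N.arrive g (w.1.1.take j) t ∈ N.H)
    (hT : ∀ e, MonotoneOn (N.Te e (g e)) N.H)
    (hD : ∀ e, ∀ t ∈ N.H, 0 ≤ N.D e (g e) t)
    (heq : ∀ e, N.dens (g e) = Measure.sum fun w : N.WalkIdx =>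
      ∑ j ∈ Finset.range w.1.1.length,
        if w.1.1[j]? = some e then (N.dens (h w)).map (N.ahat g (w.1.1.take j)) else 0) :
    ∑ e, ∫⁻ t in N.H, ENNReal.ofReal (N.D e (g e) t * g e t)
      = ∑' w : N.WalkIdx, ∫⁻ t, ENNReal.ofReal (N.arrive g w.1.1 t - t) ∂(N.dens (h w)) := by
  have hmono := fun w : N.WalkIdx => N.arrive_monotoneOn g hT w.1.1 (hmaps w)
  have hmeas : ∀ w : N.WalkIdx, ∀ j ≤ w.1.1.length,
      Measurable (N.ahat g (w.1.1.take j)) := fun w j hj =>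
    N.measurable_clip_comp h0 (hmono w j hj)
  let φ : E → ℝ → ℝ≥0∞ := fun e t =>
    ENNReal.ofReal (N.Te e (g e) (N.clip t) - N.clip t)
  have hφ : ∀ e, Measurable (φ e) := fun e =>
    ((N.measurable_clip_comp h0 (hT e)).sub N.clip_mono.measurable).ennreal_ofReal
  have h1 : ∀ e, ∫⁻ t in N.H, ENNReal.ofReal (N.D e (g e) t * g e t)
      = ∑' w : N.WalkIdx, ∑ j ∈ Finset.range w.1.1.length,
        if w.1.1[j]? = some e then
          ∫⁻ t, φ e (N.ahat g (w.1.1.take j) t) ∂(N.dens (h w)) else 0 := by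
    intro e
    rw [← N.lintegral_of_dens_eq_sum g h e hmeas (heq e) (φ e) (hφ e),
      N.lintegral_dens (hge e) (hφ e).aemeasurable]
    refine setLIntegral_congr_fun N.measurableSet_H fun t ht => ?_
    simp only [φ]
    rw [N.clip_eq ht, mul_comm, ENNReal.ofReal_mul ((hge e).1 t)]
    congr 2
    unfold Te; ring
  simp_rw [h1]
  rw [← Summable.tsum_finsetSum (fun e _ => ENNReal.summable)]
  refine tsum_congr fun w => ?_
  rw [Finset.sum_comm]
  have h2 : ∀ j ∈ Finset.range w.1.1.length,
      (∑ e, if w.1.1[j]? = some e then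
          ∫⁻ t, φ e (N.ahat g (w.1.1.take j) t) ∂(N.dens (h w)) else 0)
      = ∫⁻ t, ENNReal.ofReal (N.ahat g (w.1.1.take (j + 1)) t
          - N.ahat g (w.1.1.take j) t) ∂(N.dens (h w)) := by
    intro j hj
    have hj' := Finset.mem_range.1 hj
    rw [Finset.sum_eq_single w.1.1[j]]
    · rw [if_pos (List.getElem?_eq_getElem hj')]
      refine lintegral_congr fun t => ?_
      simp only [φ, ahat]
      rw [N.clip_eq (hmaps w j hj'.le _ (N.clip_mem h0 t)), N.arrive_take_succ g w.1.1 j hj']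
    · intro e _ hne
      rw [if_neg]
      rw [List.getElem?_eq_getElem hj']
      intro h; exact hne (Option.some.inj h).symm
    · simp
  rw [Finset.sum_congr rfl h2, ← lintegral_finsetSum']
  · refine lintegral_congr_ae ?_
    filter_upwards [N.ae_dens (f := h w)] with t ht
    rw [← ENNReal.ofReal_sum_of_nonneg]
    · rw [Finset.sum_range_sub (fun j => N.ahat g (w.1.1.take j) t)]
      simp [ahat, N.clip_eq ht, arrive]
    · intro j hj
      have := N.arrive_le_succ g hD w.1.1 (hmaps w) j (Finset.mem_range.1 hj) t ht
      simp only [ahat, N.clip_eq ht]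
      linarith
  · intro j hj
    have hj' := Finset.mem_range.1 hj
    exact ((hmeas w (j+1) hj').sub (hmeas w j hj'.le)).ennreal_ofReal.aemeasurable

/-- Demand summed over walks. -/
lemma sum_demand [Fintype I] [Finite E] [DecidableEq I] (N : DynNet V E I)
    (h : N.WalkIdx → ℝ → ℝ) (hr : ∀ i, N.MemL1pos (N.r i))
    (hf : N.FeasibleInflow h) (φ : ℝ → ℝ≥0∞) (hφ : Measurable φ) :
    ∑' w : N.WalkIdx, ∫⁻ t, φ t ∂(N.dens (h w))
      = ∫⁻ t in N.H, ENNReal.ofReal (∑ i, N.r i t) * φ t := by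
  obtain ⟨hh, hs, hri⟩ := hf
  have hm : ∀ w, AEMeasurable (fun t => ENNReal.ofReal (h w t)) (volume.restrict N.H) :=
    fun w => (hh w).2.aemeasurable.ennreal_ofReal
  have h1 : ∀ w, ∫⁻ t, φ t ∂(N.dens (h w))
      = ∫⁻ t in N.H, ENNReal.ofReal (h w t) * φ t := fun w =>
    N.lintegral_dens (hh w) hφ.aemeasurable
  simp_rw [h1]
  rw [← lintegral_tsum (f := fun w t => ENNReal.ofReal (h w t) * φ t)
    (fun w => (hm w).mul hφ.aemeasurable)]
  have hfin : ∫⁻ t in N.H, ∑' w, ENNReal.ofReal (h w t) ≠ ⊤ := by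
    rw [lintegral_tsum hm]
    have : ∀ w, ∫⁻ t in N.H, ENNReal.ofReal (h w t)
        = ENNReal.ofReal (∫ t in N.H, h w t) := fun w =>
      (ofReal_integral_eq_lintegral_ofReal (hh w).2
        (Filter.Eventually.of_forall (hh w).1)).symm
    simp_rw [this]
    rw [← ENNReal.ofReal_tsum_of_nonneg (fun w => integral_nonneg (hh w).1) hs]
    exact ENNReal.ofReal_ne_top
  have hae := ae_lt_top' (AEMeasurable.ennreal_tsum hm) hfin
  refine lintegral_congr_ae ?_
  filter_upwards [hae, ae_all_iff.2 hri] with t ht hrt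
  rw [ENNReal.tsum_mul_right]
  congr 1
  have hsm : Summable fun w => h w t := by
    have := ENNReal.summable_toReal ht.ne
    refine this.congr fun w => ?_
    rw [ENNReal.toReal_ofReal ((hh w).1 t)]
  rw [← ENNReal.ofReal_tsum_of_nonneg (fun w => (hh w).1 t) hsm]
  congr 1
  let σ : (Σ i : I, {w : N.WalkIdx // w.1.2 = i}) ≃ N.WalkIdx :=
    Equiv.sigmaFiberEquiv (fun w : N.WalkIdx => w.1.2)
  have hsm' : Summable fun c => h (σ c) t := σ.summable_iff.2 hsm
  rw [← σ.tsum_eq, Summable.tsum_sigma hsm', tsum_fintype]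
  refine Finset.sum_congr rfl fun i _ => ?_
  rw [← hrt i]
  rfl

end Aux2

end DynNet

namespace DynNet

section Aux3

variable {V E I : Type}

lemma ext_last (N : DynNet V E I) (d0 : V) (w : (N.extend d0).WalkIdx) :
    ∃ hn : w.1.1.length - 1 < w.1.1.length,
      w.1.1[w.1.1.length - 1] = Sum.inr (Sum.inr ()) := by
  obtain ⟨⟨l, i⟩, hne, hch, hhd, hlast⟩ := w
  simp only at hne hch hhd hlast ⊢
  have hpos : 0 < l.length := List.length_pos_iff.2 hne
  refine ⟨by omega, ?_⟩
  rw [List.getLast?_eq_getElem?, List.getElem?_eq_getElem (by omega)] at hlast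
  simp only [Option.map_some, Option.some.injEq] at hlast
  generalize l[l.length - 1] = e at hlast
  rcases e with e | e | e
  · simp [extend] at hlast
  · simp [extend] at hlast
  · rfl

lemma ext_not_last (N : DynNet V E I) (d0 : V) (w : (N.extend d0).WalkIdx) (j : ℕ)
    (hj : j + 1 < w.1.1.length) : w.1.1[j] ≠ Sum.inr (Sum.inr ()) := by
  obtain ⟨⟨l, i⟩, hne, hch, hhd, hlast⟩ := w
  simp only at hne hch hhd hlast hj ⊢
  have := List.isChain_iff_getElem.1 hch j hj
  intro h
  rw [h] at this
  generalize l[j + 1] = e at this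
  rcases e with e | e | e <;> simp [extend] at this

lemma ext_mid (N : DynNet V E I) (d0 : V) (w : (N.extend d0).WalkIdx) (j : ℕ)
    (hj1 : 1 ≤ j) (hj : j + 1 < w.1.1.length) : ∃ e, w.1.1[j] = Sum.inl e := by
  have h1 := N.ext_not_last d0 w j hj
  obtain ⟨⟨l, i⟩, hne, hch, hhd, hlast⟩ := w
  simp only at hne hch hhd hlast hj h1 ⊢
  obtain ⟨k, rfl⟩ : ∃ k, j = k + 1 := ⟨j - 1, by omega⟩
  have := List.isChain_iff_getElem.1 hch k (by omega)
  generalize l[k + 1] = e at this h1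
  rcases e with e | e | e
  · exact ⟨e, rfl⟩
  · generalize l[k] = e' at this
    rcases e' with e' | e' | e' <;> simp [extend] at this
  · exact absurd rfl h1

end Aux3

end DynNet

/-!
STATEMENT 8 (Claim `TotalTravelRewrite`):
In the extended network, for every induced edge flow `g ∈ ℓ(Λ̃)` the total travel
time rewrites as
`⟨D(g,·), g⟩ = ∫_H (t_f − t)·Σ_i r_i(t) dt + ∫_H ∇_{d̃} G(t) dt`.
-/
theorem total_travel_time_rewrite_extended
    {V E I : Type} [Fintype E] [DecidableEq E] [Fintype I] [DecidableEq I]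
    [DecidableEq V]
    (N : DynNet V E I) (τmin τmax : ℝ) (d0 : V)
    (hH : 0 < N.tf' ∧ N.tf' < N.tf)
    (hr : ∀ i, N.MemL1pos (N.r i) ∧
      ¬ (∀ᵐ t ∂(MeasureTheory.volume.restrict N.H), N.r i t = 0))
    (hTG : N.TravelGeneral τmin)
    (hUB : (N.extend d0).TravelUBSet τmax)
    (hA : (N.extend d0).AMapsHToHSet)
    (hsink : ∀ i, N.d i = d0)
    (g : (E ⊕ (I ⊕ Unit)) → ℝ → ℝ)
    (hg : g ∈ (N.extend d0).InducedSet) :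
    (N.extend d0).totalCost g =
      (∫ t in N.H, (N.tf - t) * ∑ i : I, N.r i t) +
        ∫ t in N.H, (N.extend d0).nodeBal g (Sum.inr true) t := by
  have h0 : 0 ≤ N.tf := (hH.1.trans hH.2).le
  set M := N.extend d0 with hM
  obtain ⟨hgm, h, hΛ, hind⟩ := id hg
  have hfeas := hΛ.1
  have hMH : M.H = N.H := rfl
  have h0M : 0 ≤ M.tf := h0
  have hge : ∀ e, M.MemL1pos (g e) := fun e => (hgm e).1
  have hh : ∀ w, M.MemL1pos (h w) := hfeas.1
  have hmaps := hA g hg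
  have hD : ∀ e, ∀ t ∈ M.H, 0 ≤ M.D e (g e) t := by
    intro e t ht
    rcases e with e | e
    · exact hTG.nonneg e _ (hge (Sum.inl e)) t ht
    · exact le_rfl
  have hT : ∀ e, MonotoneOn (M.Te e (g e)) M.H := by
    intro e
    rcases e with e | e
    · exact hTG.fifo e _ (hge (Sum.inl e))
    · intro a _ b _ hab
      exact add_le_add hab le_rfl
  have hmono := fun w : M.WalkIdx => M.arrive_monotoneOn g hT w.1.1 (hmaps w)
  have hmeas : ∀ w : M.WalkIdx, ∀ j ≤ w.1.1.length,
      Measurable (M.ahat g (w.1.1.take j)) := fun w j hj =>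
    M.measurable_clip_comp h0M (hmono w j hj)
  have hIle : ∀ (w : M.WalkIdx) (p : List (E ⊕ (I ⊕ Unit))) (t : ℝ),
      ∫ s in M.arrPre g p t, h w s ≤ ∫ s in M.H, h w s := by
    intro w p t
    refine setIntegral_mono_set (hh w).2 (Filter.Eventually.of_forall (hh w).1) ?_
    exact Filter.Eventually.of_forall fun s hs => hs.1
  have hI0 : ∀ w : M.WalkIdx, 0 ≤ ∫ s in M.H, h w s := fun w => integral_nonneg (hh w).1
  have htnn : ∀ e t w, 0 ≤ M.term g h e t w := by
    intro e t w
    refine Finset.sum_nonneg fun j _ => ?_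
    split_ifs
    · exact integral_nonneg (hh w).1
    · exact le_rfl
  -- only the last index carries the sink edge
  have hidx : ∀ w : M.WalkIdx, ∀ j ∈ Finset.range w.1.1.length,
      j ≠ w.1.1.length - 1 → ¬ (w.1.1[j]? = some (Sum.inr (Sum.inr ()))) := by
    intro w j hj hne
    have hj' := Finset.mem_range.1 hj
    rw [List.getElem?_eq_getElem hj']
    intro hc
    exact N.ext_not_last d0 w j (by omega) (Option.some.inj hc)
  have hidx' : ∀ w : M.WalkIdx,
      w.1.1[w.1.1.length - 1]? = some (Sum.inr (Sum.inr ())) := by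
    intro w
    obtain ⟨hn, hl⟩ := N.ext_last d0 w
    rw [List.getElem?_eq_getElem hn, hl]
  have hmemlast : ∀ w : M.WalkIdx, w.1.1.length - 1 ∈ Finset.range w.1.1.length := by
    intro w
    obtain ⟨hn, hl⟩ := N.ext_last d0 w
    exact Finset.mem_range.2 hn
  have hsumlast : ∀ t ∈ M.H, Summable (M.term g h (Sum.inr (Sum.inr ())) t) := by
    intro t ht
    refine Summable.of_nonneg_of_le (htnn _ t) (fun w => ?_) hfeas.2.1
    unfold DynNet.term
    rw [Finset.sum_eq_single (w.1.1.length - 1)]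
    · rw [if_pos (hidx' w)]
      exact hIle _ _ _
    · intro j hj hne
      rw [if_neg (hidx w j hj hne)]
    · intro hc; exact absurd (hmemlast w) hc
  have hlasteq := M.dens_eq_sum h0M g h (Sum.inr (Sum.inr ())) (hge _) hh hind hmaps hmono
    hsumlast
  -- all flow reaches the sink by time `tf'`
  have hlate : ∀ w : M.WalkIdx,
      M.dens (h w) (M.ahat g (w.1.1.take (w.1.1.length - 1)) ⁻¹' Ioi N.tf') = 0 := by
    have hz : M.dens (g (Sum.inr (Sum.inr ()))) (Ioi N.tf') = 0 := by
      rw [M.dens_apply (hge _) measurableSet_Ioi, ENNReal.ofReal_eq_zero]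
      apply le_of_eq
      refine setIntegral_eq_zero_of_forall_eq_zero fun s hs => ?_
      refine (hgm (Sum.inr (Sum.inr ()))).2 s fun hs' => ?_
      exact absurd hs'.2 (not_le.2 hs.1)
    rw [hlasteq, Measure.sum_apply _ measurableSet_Ioi, ENNReal.tsum_eq_zero] at hz
    intro w
    have hzw := hz w
    rw [Measure.finsetSum_apply, Finset.sum_eq_zero_iff] at hzw
    have := hzw _ (hmemlast w)
    rw [if_pos (hidx' w), Measure.map_apply (hmeas w _ (Nat.sub_le _ _)) measurableSet_Ioi]
      at this
    exact this
  obtain ⟨K, hK⟩ := exists_nat_gt (N.tf' / τmin)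
  have hτ := hTG.tmin_pos
  have hlong : ∀ w : M.WalkIdx, K + 2 < w.1.1.length → ∫ s in M.H, h w s = 0 := by
    intro w hw
    have hbig : ∀ t ∈ M.H, N.tf' < M.arrive g (w.1.1.take (w.1.1.length - 1)) t := by
      intro t ht
      by_contra hcon
      push Not at hcon
      have hmon : ∀ j k, j ≤ k → k ≤ w.1.1.length →
          M.arrive g (w.1.1.take j) t ≤ M.arrive g (w.1.1.take k) t := by
        intro j k hjk
        induction k, hjk using Nat.le_induction with
        | base => intro _; exact le_rfl
        | succ k hk ih =>
          intro hk'
          exact (ih (by omega)).trans (M.arrive_le_succ g hD w.1.1 (hmaps w) k hk' t ht)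
      have hlow : ∀ j : ℕ, j + 1 ≤ w.1.1.length - 1 →
          (j : ℝ) * τmin ≤ M.arrive g (w.1.1.take (j + 1)) t := by
        intro j
        induction j with
        | zero =>
          intro hj
          simpa using (hmaps w 1 (by omega) t ht).1
        | succ j ih =>
          intro hj
          have ih' := ih (by omega)
          have hlt : j + 1 < w.1.1.length := by omega
          obtain ⟨e, he⟩ := N.ext_mid d0 w (j + 1) (by omega) (by omega)
          have hmem := hmaps w (j + 1) (by omega) t ht
          have hle : M.arrive g (w.1.1.take (j + 1)) t ≤ N.tf' :=
            (hmon (j + 1) (w.1.1.length - 1) (by omega) (by omega)).trans hcon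
          have hlb := hTG.lb e (g (Sum.inl e)) (hge (Sum.inl e)) _ ⟨hmem.1, hle⟩
          rw [M.arrive_take_succ g w.1.1 (j + 1) hlt, he]
          have hTe : ∀ x, M.Te (Sum.inl e) (g (Sum.inl e)) x
            = x + N.D e (g (Sum.inl e)) x := fun x => rfl
          rw [hTe]
          push_cast
          linarith
      have h3 := hlow K (by omega)
      have h4 := hmon (K + 1) (w.1.1.length - 1) (by omega) (by omega)
      rw [div_lt_iff₀ hτ] at hK
      linarith
    have hset : M.ahat g (w.1.1.take (w.1.1.length - 1)) ⁻¹' Ioi N.tf' = univ := by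
      ext s
      simp only [mem_preimage, mem_Ioi, mem_univ, iff_true]
      exact hbig _ (M.clip_mem h0M s)
    have := hlate w
    rw [hset, M.dens_apply (hh w) MeasurableSet.univ, univ_inter, ENNReal.ofReal_eq_zero] at this
    exact le_antisymm this (hI0 w)
  have hsum : ∀ e, ∀ t ∈ M.H, Summable (M.term g h e t) := by
    intro e t ht
    refine Summable.of_nonneg_of_le (htnn e t) (fun w => ?_)
      (hfeas.2.1.mul_left ((K : ℝ) + 2))
    have hb : M.term g h e t w ≤ (w.1.1.length : ℝ) * ∫ s in M.H, h w s := by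
      unfold DynNet.term
      have := Finset.sum_le_card_nsmul (Finset.range w.1.1.length)
        (fun j => if w.1.1[j]? = some e then ∫ s in M.arrPre g (w.1.1.take j) t, h w s else 0)
        (∫ s in M.H, h w s) (by
          intro j _
          split_ifs
          · exact hIle _ _ _
          · exact hI0 w)
      simpa using this
    refine hb.trans ?_
    rcases lt_or_ge (K + 2) w.1.1.length with hl | hl
    · rw [hlong w hl]; simp
    · refine mul_le_mul_of_nonneg_right ?_ (hI0 w)
      exact_mod_cast hl
  have heq := fun e => M.dens_eq_sum h0M g h e (hge e) hh hind hmaps hmono (hsum e)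
  have hL := M.sum_edges h0M g h hge hmaps hT hD heq
  have hmt : Measurable fun t : ℝ => ENNReal.ofReal (N.tf - t) :=
    (measurable_const.sub measurable_id).ennreal_ofReal
  have hR := M.sum_demand h (fun i => (hr i).1) hfeas _ hmt
  -- the sink edge
  have hB : ∫⁻ t, ENNReal.ofReal (N.tf - t) ∂(M.dens (g (Sum.inr (Sum.inr ()))))
      = ∑' w : M.WalkIdx, ∫⁻ t, ENNReal.ofReal (N.tf - M.arrive g w.1.1 t) ∂(M.dens (h w)) := by
    rw [M.lintegral_of_dens_eq_sum g h _ hmeas hlasteq _ hmt]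
    refine tsum_congr fun w => ?_
    rw [Finset.sum_eq_single (w.1.1.length - 1)]
    · rw [if_pos (hidx' w)]
      refine lintegral_congr_ae ?_
      filter_upwards [M.ae_dens (f := h w)] with t ht
      obtain ⟨hn, hl⟩ := N.ext_last d0 w
      have h5 := M.arrive_take_succ g w.1.1 (w.1.1.length - 1) hn t
      rw [Nat.sub_add_cancel (by omega), List.take_length, hl] at h5
      have hTe : ∀ x, M.Te (Sum.inr (Sum.inr ())) (g (Sum.inr (Sum.inr ()))) x = x + 0 :=
        fun x => rfl
      rw [hTe, add_zero] at h5
      simp only [DynNet.ahat, M.clip_eq ht]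
      rw [h5]
    · intro j hj hne
      rw [if_neg (hidx w j hj hne)]
    · intro hc; exact absurd (hmemlast w) hc
  have hmain : (∑ e, ∫⁻ t in M.H, ENNReal.ofReal (M.D e (g e) t * g e t))
      + ∫⁻ t, ENNReal.ofReal (N.tf - t) ∂(M.dens (g (Sum.inr (Sum.inr ()))))
      = ∫⁻ t in M.H, ENNReal.ofReal (∑ i, M.r i t) * ENNReal.ofReal (N.tf - t) := by
    rw [hL, hB, ← hR, ← ENNReal.tsum_add]
    refine tsum_congr fun w => ?_
    rw [← lintegral_add_right']
    · refine lintegral_congr_ae ?_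
      filter_upwards [M.ae_dens (f := h w)] with t ht
      have hm1 := hmaps w _ le_rfl t ht
      have hm2 := M.le_arrive g hD w.1.1 (hmaps w) t ht _ le_rfl
      rw [List.take_length] at hm1 hm2
      have hm3 : M.arrive g w.1.1 t ≤ N.tf := hm1.2
      rw [← ENNReal.ofReal_add (by linarith) (by linarith)]
      congr 1; ring
    · have := hmeas w _ le_rfl
      rw [List.take_length] at this
      refine AEMeasurable.congr
        (f := fun t => ENNReal.ofReal (N.tf - M.ahat g w.1.1 t))
        (measurable_const.sub this).ennreal_ofReal.aemeasurable ?_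
      filter_upwards [M.ae_dens (f := h w)] with t ht
      simp only [DynNet.ahat, M.clip_eq ht]
  have hrm : ∀ t, 0 ≤ ∑ i, N.r i t := fun t => Finset.sum_nonneg fun i _ => (hr i).1.1 t
  have hRreal : ∫ t in N.H, (N.tf - t) * ∑ i : I, N.r i t
      = (∫⁻ t in M.H, ENNReal.ofReal (∑ i, M.r i t) * ENNReal.ofReal (N.tf - t)).toReal := by
    rw [integral_eq_lintegral_of_nonneg_ae]
    · congr 1
      refine setLIntegral_congr_fun N.measurableSet_H fun t ht => ?_
      rw [mul_comm, ENNReal.ofReal_mul (hrm t)]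
      rfl
    · filter_upwards [ae_restrict_mem N.measurableSet_H] with t ht
      exact mul_nonneg (sub_nonneg.2 ht.2) (hrm t)
    · refine AEStronglyMeasurable.mul ?_ ?_
      · exact (measurable_const.sub measurable_id).aestronglyMeasurable
      · exact (integrable_finsetSum _ fun i _ => (hr i).1.2).aestronglyMeasurable
  have hRfin : ∫⁻ t in M.H, ENNReal.ofReal (∑ i, M.r i t) * ENNReal.ofReal (N.tf - t) ≠ ⊤ := by
    have hint : IntegrableOn (fun t => ∑ i, N.r i t) N.H :=
      integrable_finsetSum _ fun i _ => (hr i).1.2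
    have hle : ∫⁻ t in M.H, ENNReal.ofReal (∑ i, M.r i t) * ENNReal.ofReal (N.tf - t)
        ≤ ∫⁻ t in M.H, ENNReal.ofReal (∑ i, M.r i t) * ENNReal.ofReal N.tf := by
      refine setLIntegral_mono' M.measurableSet_H fun t ht => ?_
      gcongr
      have : 0 ≤ t := ht.1
      linarith
    refine ne_top_of_le_ne_top ?_ hle
    rw [lintegral_mul_const' _ _ ENNReal.ofReal_ne_top]
    refine ENNReal.mul_ne_top ?_ ENNReal.ofReal_ne_top
    have h6 := ofReal_integral_eq_lintegral_ofReal hint (Filter.Eventually.of_forall hrm)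
    change ∫⁻ t in N.H, ENNReal.ofReal (∑ i, N.r i t) ≠ ⊤
    rw [← h6]
    exact ENNReal.ofReal_ne_top
  rw [← hmain] at hRfin
  have hLfin := (ENNReal.add_ne_top.1 hRfin).1
  have hBfin := (ENNReal.add_ne_top.1 hRfin).2
  have hLreal : M.totalCost g
      = (∑ e, ∫⁻ t in M.H, ENNReal.ofReal (M.D e (g e) t * g e t)).toReal := by
    rw [ENNReal.toReal_sum (fun e he => (ENNReal.sum_ne_top.1 hLfin) e he)]
    unfold DynNet.totalCost
    refine Finset.sum_congr rfl fun e _ => ?_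
    rw [integral_eq_lintegral_of_nonneg_ae]
    · filter_upwards [ae_restrict_mem M.measurableSet_H] with t ht
      exact mul_nonneg (hD e t ht) ((hge e).1 t)
    · refine AEStronglyMeasurable.mul ?_ (hge e).2.aestronglyMeasurable
      refine AEMeasurable.aestronglyMeasurable ?_
      have h7 := (aemeasurable_restrict_of_monotoneOn (μ := volume) M.measurableSet_H
        (hT e)).sub measurable_id.aemeasurable
      refine h7.congr (Filter.Eventually.of_forall fun t => ?_)
      simp [DynNet.Te]
  have hBreal : ∫ t in N.H, M.nodeBal g (Sum.inr true) t
      = - (∫⁻ t, ENNReal.ofReal (N.tf - t) ∂(M.dens (g (Sum.inr (Sum.inr ()))))).toReal := by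
    have hnb : ∀ t, M.nodeBal g (Sum.inr true) t
        = - ∫ s in Iic t ∩ M.H, g (Sum.inr (Sum.inr ())) s := by
      intro t
      have hset : {τ | τ ∈ M.H ∧ M.Te (Sum.inr (Sum.inr ())) (g (Sum.inr (Sum.inr ()))) τ
          ∈ Icc 0 t} = Iic t ∩ M.H := by
        ext s
        have hTe : M.Te (Sum.inr (Sum.inr ())) (g (Sum.inr (Sum.inr ()))) s = s + 0 := rfl
        simp only [mem_ofPred_eq, hTe, add_zero, mem_inter_iff, mem_Iic, mem_Icc]
        constructor
        · rintro ⟨a, b, c⟩; exact ⟨c, a⟩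
        · rintro ⟨a, b⟩; exact ⟨b, b.1, a⟩
      rw [← hset]
      simp [DynNet.nodeBal, DynNet.cumOut, hM, DynNet.extend, Fintype.sum_sum_type]
    simp_rw [hnb]
    rw [integral_neg, integral_eq_lintegral_of_nonneg_ae]
    · rw [← hM] at *
      congr 2
      have h8 := M.lintegral_cum _ (hge (Sum.inr (Sum.inr ())))
      change _ = ∫⁻ t, ENNReal.ofReal (M.tf - t) ∂_
      rw [← h8]
      refine lintegral_congr fun t => ?_
      rw [M.dens_apply (hge _) measurableSet_Iic]
    · exact Filter.Eventually.of_forall fun t => integral_nonneg (hge _).1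
    · refine Measurable.aestronglyMeasurable (Monotone.measurable ?_)
      intro a b hab
      refine setIntegral_mono_set ((hge _).2.mono_set inter_subset_right)
        (Filter.Eventually.of_forall (hge _).1) ?_
      exact Filter.Eventually.of_forall fun s hs => ⟨le_trans hs.1 hab, hs.2⟩
  rw [hLreal, hRreal, hBreal, ← hmain, ENNReal.toReal_add hLfin hBfin]
  ring
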